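/- Let d ≥ 4, let F = Σ_{|α|=d−1} X_α Y^α be the full Perazzo form and A_F = R/Ann_R(F) the full Perazzo algebra. Then HF_{A_F}(0) = HF_{A_F}(d) = 1, and for every 1 ≤ i ≤ d−1, HF_{A_F}(i) = binom(i+m−1, m−1) + binom(d−i+m−1, m−1). -/

import Mathlib

open MvPolynomial

/-- The differential operator `∏_i ∂^{s i}/∂X_i^{s i}` acting on `K[X_i : i ∈ σ]`
(any order of composition gives the same operator, since partial derivatives commute). -/
noncomputable def diffOp {K : Type*} [CommSemiring K] {σ : Type*} [DecidableEq σ]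
    (s : σ →₀ ℕ) : Module.End K (MvPolynomial σ K) :=
  (s.support.toList.map fun i =>
    ((MvPolynomial.pderiv i).toLinearMap : Module.End K (MvPolynomial σ K)) ^ s i).prod

/-- The apolarity (differentiation) action `f ∘ F` of a polynomial `f` on a polynomial `F`:
each variable of `f` acts as partial differentiation with respect to the corresponding
variable of `F`. -/
noncomputable def diffAction {K : Type*} [CommSemiring K] {σ : Type*} [DecidableEq σ]
    (f F : MvPolynomial σ K) : MvPolynomial σ K :=
  ∑ s ∈ f.support, f.coeff s • diffOp s F

/-- The apolar annihilator ideal `Ann(F) = {f : f ∘ F = 0}`.  (This set is already an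
ideal, so taking the ideal span does not change it.) -/
noncomputable def annIdeal {K : Type*} [CommSemiring K] {σ : Type*} [DecidableEq σ]
    (F : MvPolynomial σ K) : Ideal (MvPolynomial σ K) :=
  Ideal.span {f | diffAction f F = 0}

/-- Multi-indices `α = (i_1, …, i_m) ∈ ℕ^m` with `i_1 + ⋯ + i_m = d - 1`,
indexing the `x`-variables of a full Perazzo algebra. -/
abbrev MIdx (m d : ℕ) := {α : Fin m → ℕ // ∑ i, α i = d - 1}

instance (m d : ℕ) : Fintype (MIdx m d) :=
  Fintype.ofFinset (Finset.Nat.antidiagonalTuple m (d - 1))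
    (fun _ => Finset.Nat.mem_antidiagonalTuple)

/-- The variable index set of a full Perazzo algebra:
`x_α` for `|α| = d - 1` together with `y_1, …, y_m`. -/
abbrev PIdx (m d : ℕ) := MIdx m d ⊕ Fin m

/-- The full Perazzo form `F = ∑_{|α| = d-1} X_α Y^α`. -/
noncomputable def perazzoForm (K : Type*) [CommSemiring K] (m d : ℕ) :
    MvPolynomial (PIdx m d) K :=
  ∑ α : MIdx m d, X (Sum.inl α) * ∏ j, X (Sum.inr j) ^ (α.1 j)

/-- The Hilbert function of the graded quotient `K[X_i : i ∈ σ] / I` in degree `n`: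
the `K`-dimension of the image of the homogeneous degree-`n` part. -/
noncomputable def hilbertFn {K : Type*} [Field K] {σ : Type*}
    (I : Ideal (MvPolynomial σ K)) (n : ℕ) : ℕ :=
  Module.finrank K
    ((MvPolynomial.homogeneousSubmodule σ K n).map (Ideal.Quotient.mkₐ K I).toLinearMap)

/-!
The degree-`i` part of `A_F` is isomorphic, via `f ↦ f ∘ F`, to the space of order-`i`
derivatives of `F`. Since `F` is linear in the `X_α`, for `1 ≤ i ≤ d` this space is spanned by the
derivatives `∂_y^b F` with `|b| = i` and by the monomials `Y^g` with `|g| = d - i`, the latter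
because `∂_{x_α} F = Y^α`. For `i < d` these generators are linearly independent: if
`|e| = d - 1 - i`, the monomial `X_{b+e} Y^e` occurs in `∂_y^b F` and in no other generator.
The coefficients that arise are products of divisors of `(d - 1)!`, hence nonzero as soon as
`(d - 1)!` is nonzero in `K`.
-/

open scoped Nat

section Apolarity

open scoped IsMulCommutative

variable {R σ : Type*} [CommSemiring R]

theorem pderiv_mul_pderiv_comm (i j : σ) :
    ((pderiv i).toLinearMap * (pderiv j).toLinearMap : Module.End R (MvPolynomial σ R)) =
      (pderiv j).toLinearMap * (pderiv i).toLinearMap := by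
  obtain rfl | hij := eq_or_ne i j
  · rfl
  refine linearMap_ext fun s => LinearMap.ext_ring ?_
  simp [pderiv_monomial, tsub_right_comm, hij, hij.symm, mul_comm]

/-- The algebra of constant-coefficient differential operators on `R[X_i : i ∈ σ]`. -/
noncomputable abbrev constDiffOps (R σ : Type*) [CommSemiring R] :
    Subalgebra R (Module.End R (MvPolynomial σ R)) :=
  Algebra.adjoin R (Set.range fun i => (pderiv i).toLinearMap)

instance : IsMulCommutative (constDiffOps R σ) :=
  Algebra.isMulCommutative_adjoin R <| by
    rintro _ ⟨i, rfl⟩ _ ⟨j, rfl⟩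
    exact pderiv_mul_pderiv_comm i j

/-- The apolarity action `f ↦ (F ↦ f ∘ F)` as an algebra homomorphism. It is built with values in
the commutative algebra `constDiffOps R σ`, as `aeval` requires a commutative target. -/
noncomputable def apolar : MvPolynomial σ R →ₐ[R] Module.End R (MvPolynomial σ R) :=
  (constDiffOps R σ).val.comp <|
    aeval fun i => ⟨(pderiv i).toLinearMap, Algebra.subset_adjoin (Set.mem_range_self i)⟩

@[simp]
theorem apolar_X (i : σ) : apolar (X i : MvPolynomial σ R) = (pderiv i).toLinearMap := by
  simp [apolar]

theorem apolar_monomial_add (s t : σ →₀ ℕ) (p : MvPolynomial σ R) :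
    apolar (monomial (s + t) 1) p = apolar (monomial s 1) (apolar (monomial t 1) p) := by
  rw [← Module.End.mul_apply, ← map_mul, monomial_mul, one_mul]

theorem diffOp_eq_apolar [DecidableEq σ] (s : σ →₀ ℕ) :
    diffOp s = apolar (monomial s (1 : R)) := by
  rw [monomial_eq, C_1, one_mul, Finsupp.prod, ← Finset.prod_map_toList, map_list_prod,
    List.map_map, diffOp]
  simp only [Function.comp_def, map_pow, apolar_X]

theorem diffAction_eq_apolar [DecidableEq σ] (f F : MvPolynomial σ R) :
    diffAction f F = apolar f F := by
  conv_rhs => rw [f.as_sum, map_sum, LinearMap.sum_apply]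
  refine Finset.sum_congr rfl fun s _ => ?_
  rw [diffOp_eq_apolar, ← LinearMap.smul_apply, ← map_smul, smul_monomial, smul_eq_mul, mul_one]

theorem mem_annIdeal_iff [DecidableEq σ] {f F : MvPolynomial σ R} :
    f ∈ annIdeal F ↔ apolar f F = 0 := by
  let I : Ideal (MvPolynomial σ R) :=
    { carrier := {f | diffAction f F = 0}
      zero_mem' := by simp [diffAction_eq_apolar]
      add_mem' := by simp +contextual [diffAction_eq_apolar]
      smul_mem' := by simp +contextual [diffAction_eq_apolar] }
  have hI : annIdeal F = I := Ideal.span_eq I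
  rw [hI, ← diffAction_eq_apolar]
  rfl

theorem pderiv_pow_monomial (i : σ) (k : ℕ) (t : σ →₀ ℕ) (b : R) :
    ((pderiv i).toLinearMap ^ k : Module.End R (MvPolynomial σ R)) (monomial t b) =
      monomial (t - Finsupp.single i k) (b * (t i).descFactorial k) := by
  induction k with
  | zero => simp
  | succ k ih =>
    rw [pow_succ', Module.End.mul_apply, ih, Derivation.coeFn_coe, pderiv_monomial, tsub_tsub,
      ← Finsupp.single_add, Nat.descFactorial_succ]
    simp [mul_comm, mul_left_comm]

theorem apolar_monomial_monomial (s t : σ →₀ ℕ) (b : R) :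
    apolar (monomial s 1) (monomial t b) =
      monomial (t - s) (b * s.prod fun i k => ((t i).descFactorial k : R)) := by
  induction s using Finsupp.induction with
  | zero =>
    rw [← C_apply, C_1, map_one]
    simp
  | single_add i k s hi _ ih =>
    have hpow : (monomial (Finsupp.single i k) 1 : MvPolynomial σ R) = X i ^ k := by
      rw [X_pow_eq_monomial]
    have hti : (t - s) i = t i := by simp [Finsupp.notMem_support_iff.1 hi]
    rw [apolar_monomial_add, ih, hpow, map_pow, apolar_X, pderiv_pow_monomial, hti, tsub_tsub,
      add_comm s, Finsupp.prod_add_index_of_disjoint, Finsupp.prod_single_index (by simp),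
      mul_right_comm, mul_assoc]
    exact (Finset.disjoint_singleton_left.2 hi).mono_left Finsupp.support_single_subset

theorem apolar_monomial_monomial_of_not_le {s t : σ →₀ ℕ} (h : ¬s ≤ t) (b : R) :
    apolar (monomial s 1) (monomial t b) = 0 := by
  obtain ⟨i, hi⟩ : ∃ i, t i < s i := by simpa [Finsupp.le_def] using h
  have hprod : (s.prod fun i k => ((t i).descFactorial k : R)) = 0 :=
    Finset.prod_eq_zero (Finsupp.mem_support_iff.2 (by omega : s i ≠ 0))
      (by simp [Nat.descFactorial_eq_zero_iff_lt.2 hi])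
  rw [apolar_monomial_monomial, hprod, mul_zero, map_zero]

/-- The space of derivatives of `F` of order `n`, that is, all `f ∘ F` with `f` a form of
degree `n`. -/
noncomputable def derivSpace (F : MvPolynomial σ R) (n : ℕ) : Submodule R (MvPolynomial σ R) :=
  (homogeneousSubmodule σ R n).map (apolar.toLinearMap.flip F)

theorem derivSpace_eq_span (F : MvPolynomial σ R) (n : ℕ) :
    derivSpace F n =
      Submodule.span R ((fun s => apolar (monomial s 1) F) '' {s : σ →₀ ℕ | s.degree = n}) := by
  rw [derivSpace, homogeneousSubmodule_eq_finsupp_supported,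
    AddMonoidAlgebra.supported_eq_span_single, Submodule.map_span, Set.image_image]
  rfl

theorem apolar_monomial_mem_derivSpace (F : MvPolynomial σ R) {s : σ →₀ ℕ} {n : ℕ}
    (hs : s.degree = n) : apolar (monomial s 1) F ∈ derivSpace F n :=
  Submodule.mem_map_of_mem (isHomogeneous_monomial 1 hs)

theorem derivSpace_zero (F : MvPolynomial σ R) : derivSpace F 0 = Submodule.span R {F} := by
  rw [derivSpace, homogeneousSubmodule_zero, Submodule.one_eq_span, Submodule.map_span,
    Set.image_singleton]
  simp

end Apolarity

section HilbertFunction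

variable {K : Type*} [Field K]

theorem finrank_map_eq_of_ker_eq {V W₁ W₂ : Type*} [AddCommGroup V] [Module K V]
    [AddCommGroup W₁] [Module K W₁] [AddCommGroup W₂] [Module K W₂]
    {f : V →ₗ[K] W₁} {g : V →ₗ[K] W₂} (h : LinearMap.ker f = LinearMap.ker g)
    (p : Submodule K V) : Module.finrank K (p.map f) = Module.finrank K (p.map g) := by
  have hker : LinearMap.ker (f.domRestrict p) = LinearMap.ker (g.domRestrict p) := by
    rw [LinearMap.ker_domRestrict, LinearMap.ker_domRestrict, h]
  rw [← LinearMap.range_domRestrict, ← LinearMap.range_domRestrict,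
    ← (f.domRestrict p).quotKerEquivRange.finrank_eq, hker,
    (g.domRestrict p).quotKerEquivRange.finrank_eq]

variable {σ : Type*} [DecidableEq σ]

theorem hilbertFn_annIdeal (F : MvPolynomial σ K) (n : ℕ) :
    hilbertFn (annIdeal F) n = Module.finrank K (derivSpace F n) := by
  refine finrank_map_eq_of_ker_eq ?_ _
  ext f
  simp [Ideal.Quotient.eq_zero_iff_mem, mem_annIdeal_iff]

theorem hilbertFn_annIdeal_zero {F : MvPolynomial σ K} (hF : F ≠ 0) :
    hilbertFn (annIdeal F) 0 = 1 := by
  rw [hilbertFn_annIdeal, derivSpace_zero, finrank_span_singleton hF]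

end HilbertFunction

section DescFactorial

variable {R ι : Type*} [CommSemiring R] [Fintype ι] {a b : ι → ℕ}

theorem prod_descFactorial_eq_zero (h : ¬b ≤ a) :
    ∏ j, ((a j).descFactorial (b j) : R) = 0 := by
  obtain ⟨j, hj⟩ : ∃ j, a j < b j := by simpa [Pi.le_def] using h
  exact Finset.prod_eq_zero (Finset.mem_univ j)
    (by rw [Nat.descFactorial_eq_zero_iff_lt.2 hj, Nat.cast_zero])

theorem prod_descFactorial_ne_zero [NoZeroDivisors R] {n : ℕ} (hn : (n ! : R) ≠ 0) (hab : b ≤ a)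
    (ha : ∑ j, a j ≤ n) :
    ∏ j, ((a j).descFactorial (b j) : R) ≠ 0 := by
  have : Nontrivial R := nontrivial_of_ne _ _ hn
  refine Finset.prod_ne_zero_iff.2 fun j _ => ne_zero_of_dvd_ne_zero hn (Nat.cast_dvd_cast ?_)
  have haj : a j ≤ n := (Finset.single_le_sum_of_canonicallyOrdered (Finset.mem_univ j)).trans ha
  exact (Dvd.intro_left _ (Nat.factorial_mul_descFactorial (hab j))).trans
    (Nat.factorial_dvd_factorial haj)

end DescFactorial

section Exponents

variable {m d : ℕ}

/-- The exponent vector of `Y^b`. -/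
noncomputable def yExp (d : ℕ) (b : Fin m → ℕ) : PIdx m d →₀ ℕ :=
  Finsupp.sumElim 0 (Finsupp.equivFunOnFinite.symm b)

/-- The exponent vector of `X_α Y^b`. -/
noncomputable def xyExp (α : MIdx m d) (b : Fin m → ℕ) : PIdx m d →₀ ℕ :=
  Finsupp.single (Sum.inl α) 1 + yExp d b

@[simp]
theorem yExp_inl (b : Fin m → ℕ) (α : MIdx m d) : yExp d b (Sum.inl α) = 0 := rfl

@[simp]
theorem yExp_inr (b : Fin m → ℕ) (j : Fin m) : yExp d b (Sum.inr j) = b j := rfl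

@[simp]
theorem xyExp_inr (α : MIdx m d) (b : Fin m → ℕ) (j : Fin m) : xyExp α b (Sum.inr j) = b j := by
  simp [xyExp]

theorem eq_yExp_of_forall_inl {s : PIdx m d →₀ ℕ} (h : ∀ α, s (Sum.inl α) = 0) :
    s = yExp d fun j => s (Sum.inr j) := by
  ext (α | j) <;> simp [h]

@[simp]
theorem yExp_zero : yExp d (0 : Fin m → ℕ) = 0 := by
  ext (α | j) <;> rfl

@[simp]
theorem degree_yExp (b : Fin m → ℕ) : (yExp d b).degree = ∑ j, b j := by
  simp [Finsupp.degree_eq_sum]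

theorem yExp_injective : Function.Injective (yExp d : (Fin m → ℕ) → PIdx m d →₀ ℕ) :=
  fun _ _ h => funext fun j => DFunLike.congr_fun h (Sum.inr j)

theorem xyExp_inj {α β : MIdx m d} {a b : Fin m → ℕ} :
    xyExp α a = xyExp β b ↔ α = β ∧ a = b := by
  refine ⟨fun h => ?_, by rintro ⟨rfl, rfl⟩; rfl⟩
  have hαβ : α = β := by
    by_contra hne
    simpa [xyExp, Ne.symm hne] using DFunLike.congr_fun h (Sum.inl α)
  subst hαβ
  exact ⟨rfl, yExp_injective (add_left_cancel h)⟩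

theorem xyExp_ne_yExp (α : MIdx m d) (a b : Fin m → ℕ) : xyExp α a ≠ yExp d b := fun h => by
  simpa [xyExp] using DFunLike.congr_fun h (Sum.inl α)

theorem yExp_sub_yExp (a b : Fin m → ℕ) : yExp d a - yExp d b = yExp d (a - b) := by
  ext (α | j) <;> simp

theorem xyExp_sub_yExp (α : MIdx m d) (a b : Fin m → ℕ) :
    xyExp α a - yExp d b = xyExp α (a - b) := by
  ext (β | j) <;> simp [xyExp]

theorem prod_yExp {M : Type*} [CommMonoid M] (b : Fin m → ℕ) {f : PIdx m d → ℕ → M}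
    (hf : ∀ i, f i 0 = 1) : (yExp d b).prod f = ∏ j, f (Sum.inr j) (b j) := by
  simp [Finsupp.prod_fintype _ _ hf, hf]

theorem monomial_yExp_one {R : Type*} [CommSemiring R] (b : Fin m → ℕ) :
    monomial (yExp d b) (1 : R) = ∏ j, X (Sum.inr j) ^ b j := by
  rw [monomial_eq, C_1, one_mul, prod_yExp _ fun _ => pow_zero _]

end Exponents

section Derivatives

variable (R : Type*) [CommSemiring R] {m d : ℕ}

theorem perazzoForm_eq_sum_monomial :
    perazzoForm R m d = ∑ α : MIdx m d, monomial (xyExp α α.1) 1 := by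
  refine Finset.sum_congr rfl fun α _ => ?_
  rw [← monomial_yExp_one, X, monomial_mul, one_mul, xyExp]

variable {R} in
theorem apolar_yExp_yExp (a b : Fin m → ℕ) :
    apolar (monomial (yExp d b) 1) (monomial (yExp d a) 1) =
      monomial (yExp d (a - b)) (∏ j, ((a j).descFactorial (b j) : R)) := by
  rw [apolar_monomial_monomial, yExp_sub_yExp, prod_yExp _ (by simp), one_mul]
  simp only [yExp_inr]

variable {R} in
theorem apolar_yExp_xyExp (α : MIdx m d) (a b : Fin m → ℕ) :
    apolar (monomial (yExp d b) 1) (monomial (xyExp α a) 1) =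
      monomial (xyExp α (a - b)) (∏ j, ((a j).descFactorial (b j) : R)) := by
  rw [apolar_monomial_monomial, xyExp_sub_yExp, prod_yExp _ (by simp), one_mul]
  simp only [xyExp_inr]

theorem apolar_single_inl_perazzoForm (α : MIdx m d) :
    apolar (monomial (Finsupp.single (Sum.inl α) 1) 1) (perazzoForm R m d) =
      monomial (yExp d α.1) 1 := by
  rw [perazzoForm_eq_sum_monomial, map_sum, Finset.sum_eq_single_of_mem α (Finset.mem_univ α)]
  · simp [apolar_monomial_monomial, xyExp]
  · intro β _ hβ
    refine apolar_monomial_monomial_of_not_le (fun hle => ?_) _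
    simpa [xyExp, hβ] using hle (Sum.inl α)

/-- The derivative `∂_y^b F` of the full Perazzo form `F`. -/
noncomputable def perazzoDeriv (d : ℕ) (b : Fin m → ℕ) : MvPolynomial (PIdx m d) R :=
  apolar (monomial (yExp d b) 1) (perazzoForm R m d)

theorem perazzoDeriv_zero : perazzoDeriv R d (0 : Fin m → ℕ) = perazzoForm R m d := by
  rw [perazzoDeriv, monomial_yExp_one]
  simp

theorem perazzoDeriv_eq_sum (b : Fin m → ℕ) :
    perazzoDeriv R d b = ∑ α : MIdx m d,
      monomial (xyExp α (α.1 - b)) (∏ j, ((α.1 j).descFactorial (b j) : R)) := by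
  simp only [perazzoDeriv, perazzoForm_eq_sum_monomial, map_sum, apolar_yExp_xyExp]

theorem perazzoDeriv_eq_zero {b : Fin m → ℕ} (hb : d - 1 < ∑ j, b j) : perazzoDeriv R d b = 0 := by
  rw [perazzoDeriv_eq_sum]
  refine Finset.sum_eq_zero fun α _ => ?_
  have hle : ¬b ≤ α.1 := fun h => by
    have := Finset.sum_le_sum fun j (_ : j ∈ Finset.univ) => h j
    have := α.2
    omega
  rw [prod_descFactorial_eq_zero hle, map_zero]

theorem coeff_xyExp_perazzoDeriv (α : MIdx m d) (b e : Fin m → ℕ) :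
    coeff (xyExp α e) (perazzoDeriv R d b) =
      if α.1 = b + e then ∏ j, ((α.1 j).descFactorial (b j) : R) else 0 := by
  simp only [perazzoDeriv_eq_sum, coeff_sum, coeff_monomial, xyExp_inj, ite_and,
    Finset.sum_ite_eq', Finset.mem_univ, if_true]
  by_cases hb : b ≤ α.1
  · simp only [tsub_eq_iff_eq_add_of_le hb, add_comm e]
  · simp [prod_descFactorial_eq_zero hb]

theorem coeff_yExp_perazzoDeriv (b e : Fin m → ℕ) :
    coeff (yExp d e) (perazzoDeriv R d b) = 0 := by
  simp [perazzoDeriv_eq_sum, coeff_sum, coeff_monomial, xyExp_ne_yExp]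

theorem perazzoForm_ne_zero [Nontrivial R] [NeZero m] : perazzoForm R m d ≠ 0 := by
  let α : MIdx m d := ⟨Pi.single 0 (d - 1), by simp⟩
  rw [← perazzoDeriv_zero]
  refine ne_zero_iff.2 ⟨xyExp α α.1, ?_⟩
  simp [coeff_xyExp_perazzoDeriv]

end Derivatives

section Generators

open Finset.Nat (antidiagonalTuple mem_antidiagonalTuple)

variable (K : Type*) [Field K] {m d i : ℕ}

/-- The generators `∂_y^b F` with `|b| = i` and `Y^g` with `|g| = d - i` of the space of order-`i`
derivatives of the full Perazzo form `F`. -/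
noncomputable def perazzoGenerator (m d i : ℕ) :
    antidiagonalTuple m i ⊕ antidiagonalTuple m (d - i) → MvPolynomial (PIdx m d) K :=
  Sum.elim (fun b => perazzoDeriv K d b.1) fun g => monomial (yExp d g.1) 1

theorem derivSpace_perazzoForm_le (m d i : ℕ) :
    derivSpace (perazzoForm K m d) i ≤
      Submodule.span K (Set.range (perazzoGenerator K m d i)) := by
  rw [derivSpace_eq_span, Submodule.span_le]
  rintro _ ⟨s, rfl, rfl⟩
  by_cases hs : ∀ α, s (Sum.inl α) = 0
  · obtain ⟨b, rfl⟩ : ∃ b, s = yExp d b := ⟨_, eq_yExp_of_forall_inl hs⟩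
    exact Submodule.subset_span ⟨Sum.inl ⟨b, mem_antidiagonalTuple.2 (degree_yExp b).symm⟩, rfl⟩
  obtain ⟨α, hα⟩ := not_forall.1 hs
  obtain ⟨t, rfl⟩ : ∃ t, s = t + Finsupp.single (Sum.inl α) 1 :=
    ⟨_, (tsub_add_cancel_of_le (Finsupp.single_le_iff.2 (Nat.one_le_iff_ne_zero.2 hα))).symm⟩
  simp only [apolar_monomial_add, apolar_single_inl_perazzoForm, SetLike.mem_coe]
  by_cases ht : t ≤ yExp d α.1
  swap
  · rw [apolar_monomial_monomial_of_not_le ht]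
    exact zero_mem _
  obtain ⟨g, hg⟩ : ∃ g, yExp d α.1 - t = yExp d g :=
    ⟨_, eq_yExp_of_forall_inl fun β => by simp⟩
  have hdeg : ∑ j, g j = d - (t + Finsupp.single (Sum.inl α) 1).degree := by
    have := congrArg Finsupp.degree (tsub_add_cancel_of_le ht)
    rw [hg, map_add, degree_yExp, degree_yExp, α.2] at this
    rw [map_add, Finsupp.degree_single]
    omega
  rw [apolar_monomial_monomial, hg, ← mul_one (_ * _), ← smul_eq_mul, ← smul_monomial]
  exact Submodule.smul_mem _ _
    (Submodule.subset_span ⟨Sum.inr ⟨g, mem_antidiagonalTuple.2 hdeg⟩, rfl⟩)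

variable {K}

theorem monomial_yExp_mem_derivSpace [NeZero m] (hK : ((d - 1)! : K) ≠ 0) (hi : 1 ≤ i)
    (hid : i ≤ d) {g : Fin m → ℕ} (hg : ∑ j, g j = d - i) :
    monomial (yExp d g) 1 ∈ derivSpace (perazzoForm K m d) i := by
  let e : Fin m → ℕ := Pi.single 0 (i - 1)
  have he : ∑ j, e j = i - 1 := by simp [e]
  let α : MIdx m d := ⟨g + e, by
    simp only [Pi.add_apply, Finset.sum_add_distrib, hg, he]
    omega⟩
  set c : K := ∏ j, ((α.1 j).descFactorial (e j) : K)
  have hc : c ≠ 0 := prod_descFactorial_ne_zero hK le_add_self α.2.le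
  have hderiv : monomial (yExp d g) c =
      apolar (monomial (yExp d e + Finsupp.single (Sum.inl α) 1) 1) (perazzoForm K m d) := by
    rw [apolar_monomial_add, apolar_single_inl_perazzoForm, apolar_yExp_yExp]
    simp [α, c]
  have hdeg : (yExp d e + Finsupp.single (Sum.inl α) 1).degree = i := by
    rw [map_add, degree_yExp, he, Finsupp.degree_single]
    omega
  rw [← inv_mul_cancel₀ hc, ← smul_eq_mul, ← smul_monomial, hderiv]
  exact Submodule.smul_mem _ _ (apolar_monomial_mem_derivSpace _ hdeg)

theorem derivSpace_perazzoForm [NeZero m] (hK : ((d - 1)! : K) ≠ 0) (hi : 1 ≤ i) (hid : i ≤ d) :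
    derivSpace (perazzoForm K m d) i =
      Submodule.span K (Set.range (perazzoGenerator K m d i)) := by
  refine (derivSpace_perazzoForm_le K m d i).antisymm (Submodule.span_le.2 ?_)
  rintro _ ⟨b | g, rfl⟩
  · exact apolar_monomial_mem_derivSpace _
      ((degree_yExp b.1).trans (mem_antidiagonalTuple.1 b.2))
  · exact monomial_yExp_mem_derivSpace hK hi hid (mem_antidiagonalTuple.1 g.2)

theorem linearIndependent_perazzoGenerator [NeZero m] (hK : ((d - 1)! : K) ≠ 0)
    (hi : i ≤ d - 1) : LinearIndependent K (perazzoGenerator K m d i) := by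
  let e : Fin m → ℕ := Pi.single 0 (d - 1 - i)
  have he : ∑ j, e j = d - 1 - i := by simp [e]
  let α (b : antidiagonalTuple m i) : MIdx m d := ⟨b.1 + e, by
    simp only [Pi.add_apply, Finset.sum_add_distrib, he, mem_antidiagonalTuple.1 b.2]
    omega⟩
  let c (b : antidiagonalTuple m i) : K := ∏ j, (((α b).1 j).descFactorial (b.1 j) : K)
  have hc (b) : c b ≠ 0 := prod_descFactorial_ne_zero hK le_self_add (α b).2.le
  refine .of_pairwise_dual_eq_zero_one _ (Sum.elim
    (fun b => (c b)⁻¹ • lcoeff K (xyExp (α b) e)) fun g => lcoeff K (yExp d g.1)) ?_ ?_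
  · rintro (b | g) (b' | g') hne
    · have hαb : (α b).1 ≠ b'.1 + e := fun h => hne (by rw [Subtype.ext (add_right_cancel h)])
      simp [perazzoGenerator, coeff_xyExp_perazzoDeriv, hαb]
    · simp [perazzoGenerator, coeff_monomial, (xyExp_ne_yExp _ _ _).symm]
    · simp [perazzoGenerator, coeff_yExp_perazzoDeriv]
    · have hg : yExp d g'.1 ≠ yExp d g.1 := fun h =>
        hne (by rw [Subtype.ext (yExp_injective h)])
      simp [perazzoGenerator, coeff_monomial, hg]
  · rintro (b | g)
    · have hαb : (α b).1 = b.1 + e := rfl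
      simpa [perazzoGenerator, coeff_xyExp_perazzoDeriv, hαb, c] using inv_mul_cancel₀ (hc b)
    · simp [perazzoGenerator]

theorem card_antidiagonalTuple [NeZero m] (n : ℕ) :
    Fintype.card (antidiagonalTuple m n) = (n + m - 1).choose (m - 1) := by
  let e : antidiagonalTuple m n ≃ {b : Fin m → ℕ // ∑ j, b j = n} :=
    Equiv.subtypeEquivRight fun _ => mem_antidiagonalTuple
  rw [Fintype.card_congr (e.trans (Sym.equivNatSumOfFintype (Fin m) n).symm),
    Sym.card_sym_eq_choose, Fintype.card_fin, add_comm m n]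
  have := NeZero.one_le (n := m)
  exact Nat.choose_symm_of_eq_add (by omega)

theorem hilbertFn_annIdeal_perazzoForm_of_lt [NeZero m] (hK : ((d - 1)! : K) ≠ 0) (hi : 1 ≤ i)
    (hid : i ≤ d - 1) :
    hilbertFn (annIdeal (perazzoForm K m d)) i =
      (i + m - 1).choose (m - 1) + (d - i + m - 1).choose (m - 1) := by
  rw [hilbertFn_annIdeal, derivSpace_perazzoForm hK hi (by omega),
    finrank_span_eq_card (linearIndependent_perazzoGenerator hK hid), Fintype.card_sum,
    card_antidiagonalTuple, card_antidiagonalTuple]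

theorem hilbertFn_annIdeal_perazzoForm_self [NeZero m] (hK : ((d - 1)! : K) ≠ 0) (hd : 1 ≤ d) :
    hilbertFn (annIdeal (perazzoForm K m d)) d = 1 := by
  have hspan : Submodule.span K (Set.range (perazzoGenerator K m d d)) = Submodule.span K {1} := by
    refine le_antisymm (Submodule.span_le.2 ?_) (Submodule.span_mono ?_)
    · rintro _ ⟨b | g, rfl⟩
      · have hb : d - 1 < ∑ j, b.1 j := by
          rw [mem_antidiagonalTuple.1 b.2]
          omega
        simp [perazzoGenerator, perazzoDeriv_eq_zero K hb]
      · have hg : g.1 = 0 := by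
          have hsum := (mem_antidiagonalTuple.1 g.2).trans (Nat.sub_self d)
          exact funext fun j => Finset.sum_eq_zero_iff.1 hsum j (Finset.mem_univ j)
        exact Submodule.subset_span (by simp [perazzoGenerator, hg])
    · rw [Set.singleton_subset_iff]
      exact ⟨Sum.inr ⟨0, mem_antidiagonalTuple.2 (by simp)⟩, by simp [perazzoGenerator]⟩
  rw [hilbertFn_annIdeal, derivSpace_perazzoForm hK hd le_rfl, hspan,
    finrank_span_singleton one_ne_zero]

end Generators

theorem hilbert_fullPerazzo_general
    (K : Type*) [Field K] (m d : ℕ) (hm : 1 ≤ m) (hd : 1 ≤ d) (hK : ((d - 1)! : K) ≠ 0) :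
    hilbertFn (annIdeal (perazzoForm K m d)) 0 = 1 ∧
    hilbertFn (annIdeal (perazzoForm K m d)) d = 1 ∧
    (∀ i : ℕ, 1 ≤ i → i ≤ d - 1 →
      hilbertFn (annIdeal (perazzoForm K m d)) i
        = Nat.choose (i + m - 1) (m - 1) + Nat.choose (d - i + m - 1) (m - 1)) := by
  have : NeZero m := NeZero.of_pos hm
  exact ⟨hilbertFn_annIdeal_zero (perazzoForm_ne_zero K), hilbertFn_annIdeal_perazzoForm_self hK hd,
    fun _ => hilbertFn_annIdeal_perazzoForm_of_lt hK⟩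

/-- For `d ≥ 4`, the Hilbert function of the full Perazzo algebra `A_F` is
`HF(0) = HF(d) = 1` and `HF(i) = binom(i+m-1, m-1) + binom(d-i+m-1, m-1)` for
`1 ≤ i ≤ d - 1`. -/
theorem hilbert_fullPerazzo
    (K : Type*) [Field K] [CharZero K] (m d : ℕ) (hm : 2 ≤ m) (hd : 4 ≤ d) :
    hilbertFn (annIdeal (perazzoForm K m d)) 0 = 1 ∧
    hilbertFn (annIdeal (perazzoForm K m d)) d = 1 ∧
    (∀ i : ℕ, 1 ≤ i → i ≤ d - 1 →
      hilbertFn (annIdeal (perazzoForm K m d)) i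
        = Nat.choose (i + m - 1) (m - 1) + Nat.choose (d - i + m - 1) (m - 1)) := by
  exact hilbert_fullPerazzo_general K m d (by omega) (by omega)
    (Nat.cast_ne_zero.2 (Nat.factorial_ne_zero _))
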